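/- Let K = ℂ(V) be the fraction field of A, with the induced Γ-action. Inside the ℂ-algebra End_ℂ(K), let S be the ℂ-subalgebra generated by the multiplication operators by elements of K together with the action operators of the elements of Γ (so S is the image of the smash product Γ # K). Then the ℂ-subalgebra of End_ℂ(K) generated by the multiplication operators by elements of A together with the operators D_i : K → K, D_i(f) = α_i^{-1}·(f − s_i(f)), for i = 1, …, n, is equal to { x ∈ S : x(A) ⊆ A }, the largest subalgebra of S stabilizing A. -/

import Mathlib

open scoped TensorProduct

noncomputable section

abbrev Vd (d : ℕ) := Fin d → ℂ
abbrev Ad (d : ℕ) := MvPolynomial (Fin d) ℂ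

/-- Action of `g ∈ GL(V)` on polynomials: substitute `X j ↦ (g⁻¹ x)_j`. -/
def glAct {d : ℕ} (g : GL (Fin d) ℂ) : Ad d →ₐ[ℂ] Ad d :=
  MvPolynomial.aeval fun j =>
    ∑ k, ((g⁻¹ : GL (Fin d) ℂ) : Matrix (Fin d) (Fin d) ℂ) j k • MvPolynomial.X k

/-- Embedding of linear forms on `V` as degree-one polynomials. -/
def lin {d : ℕ} (θ : Vd d →ₗ[ℂ] ℂ) : Ad d :=
  ∑ j, θ (Pi.single j 1) • MvPolynomial.X j

structure CoxeterSetup (d n : ℕ) where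
  Γ : Subgroup (GL (Fin d) ℂ)
  finite : Finite Γ
  s : Fin n → Γ
  gen : Subgroup.closure (Set.range s) = (⊤ : Subgroup Γ)
  α : Fin n → (Vd d →ₗ[ℂ] ℂ)
  coroot : Fin n → Vd d
  pairing : ∀ i, α i (coroot i) = 2
  refl : ∀ i (v : Vd d),
    ((s i : GL (Fin d) ℂ) : Matrix (Fin d) (Fin d) ℂ).mulVec v = v - α i v • coroot i


/-- The subalgebra of `Γ'`-invariant polynomials. -/
def FixedSub {d n : ℕ} (S : CoxeterSetup d n) (Γ' : Subgroup S.Γ) : Subalgebra ℂ (Ad d) where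
  carrier := {f | ∀ g ∈ Γ', glAct (g : GL (Fin d) ℂ) f = f}
  mul_mem' := fun hf hg g hgmem => by simp [map_mul, hf g hgmem, hg g hgmem]
  add_mem' := fun hf hg g hgmem => by simp [map_add, hf g hgmem, hg g hgmem]
  algebraMap_mem' := fun c g _ => by simp

/-- `M` (with `Γ'`-action `ρ`) descends to `A^{Γ'}`. -/
def Descends {d n : ℕ} (S : CoxeterSetup d n) (Γ' : Subgroup S.Γ) (M : Type)
    [AddCommGroup M] [Module ℂ M] [Module (Ad d) M] [IsScalarTower ℂ (Ad d) M]
    (ρ : Γ' →* Module.End ℂ M) : Prop :=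
  ∃ (N : Type) (_ : AddCommGroup N) (_ : Module (FixedSub S Γ') N)
    (e : ((Ad d) ⊗[FixedSub S Γ'] N) ≃ₗ[Ad d] M),
    ∀ (g : Γ') (a : Ad d) (x : N),
      ρ g (e (a ⊗ₜ x)) = e ((glAct ((g : S.Γ) : GL (Fin d) ℂ) a) ⊗ₜ x)

/-!
Operators in the smash product are linear over the invariants `A^Γ`, and `K` is the localization
of `A` at the nonzero invariants, so an operator of the smash product that stabilizes `A` is
determined by an `A^Γ`-linear endomorphism of `A`. Hence it suffices that multiplications and
Demazure operators generate all of `End_{A^Γ}(A)`. As `A` is finite over `A^Γ`, an endomorphism `y`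
is determined by its values on polynomials of bounded degree, and these are corrected degree by
degree: if `y` kills the polynomials of degree less than `k`, then on degree at most `k` it factors
through the words of length `k` in the Demazure operators. These words take constant values there,
and a polynomial killed by all of them is an `A^Γ`-combination of polynomials of lower degree.
-/

section LinearAlgebra

lemma exists_comp_eq_of_ker_le_ker {k V W E : Type*} [Field k] [AddCommGroup V] [Module k V]
    [AddCommGroup W] [Module k W] [AddCommGroup E] [Module k E] {L : V →ₗ[k] W} {y : V →ₗ[k] E}
    (h : LinearMap.ker L ≤ LinearMap.ker y) : ∃ T : W →ₗ[k] E, T ∘ₗ L = y := by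
  obtain ⟨r, hr⟩ := LinearMap.exists_leftInverse_of_injective
    ((LinearMap.ker L).liftQ L le_rfl) (Submodule.ker_liftQ_eq_bot' _ _ rfl)
  refine ⟨(LinearMap.ker L).liftQ y h ∘ₗ r, LinearMap.ext fun v => ?_⟩
  have hv : r (L v) = (LinearMap.ker L).mkQ v := LinearMap.congr_fun hr ((LinearMap.ker L).mkQ v)
  simp [hv]

/-- Restriction of scalars from `S` to `R`, as a homomorphism of endomorphism algebras. -/
def endRestrictScalars (R S M : Type*) [CommSemiring R] [Semiring S] [Algebra R S]
    [AddCommMonoid M] [Module R M] [Module S M] [IsScalarTower R S M] :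
    Module.End S M →ₐ[R] Module.End R M :=
  AlgHom.ofLinearMap (LinearMap.restrictScalarsₗ R S M M R) rfl fun _ _ => rfl

/-- The operators on `K` that map the image of `A` into itself. -/
def imageStabilizer (R A K : Type*) [CommSemiring R] [CommSemiring A] [CommSemiring K]
    [Algebra R A] [Algebra R K] [Algebra A K] [IsScalarTower R A K] :
    Subalgebra R (Module.End R K) where
  carrier := {x | ∀ f : A, ∃ q : A, x (algebraMap A K f) = algebraMap A K q}
  mul_mem' {x y} hx hy f := by
    obtain ⟨q, hq⟩ := hy f
    obtain ⟨p, hp⟩ := hx q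
    exact ⟨p, by rw [Module.End.mul_apply, hq, hp]⟩
  add_mem' {x y} hx hy f := by
    obtain ⟨p, hp⟩ := hx f
    obtain ⟨q, hq⟩ := hy f
    exact ⟨p + q, by rw [LinearMap.add_apply, hp, hq, map_add]⟩
  algebraMap_mem' r f := ⟨r • f, ((Algebra.linearMap A K).map_smul_of_tower r f).symm⟩

lemma exists_algebraMap_apply_eq {R A K : Type*} [CommSemiring R] [CommSemiring A] [CommSemiring K]
    [Algebra R A] [Algebra R K] [Algebra A K] [IsScalarTower R A K] [FaithfulSMul A K]
    {x : Module.End R K} (hx : ∀ f : A, ∃ q : A, x (algebraMap A K f) = algebraMap A K q) :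
    ∃ y : Module.End R A, ∀ f, algebraMap A K (y f) = x (algebraMap A K f) :=
  let j := (IsScalarTower.toAlgHom R A K).toLinearMap
  have h_range (f : A) : (x ∘ₗ j) f ∈ LinearMap.range j := (hx f).imp fun _ => Eq.symm
  have h_inj : Function.Injective j := FaithfulSMul.algebraMap_injective A K
  ⟨LinearMap.codRestrictOfInjective (x ∘ₗ j) j h_inj h_range,
    fun f => LinearMap.codRestrictOfInjective_comp_apply (x ∘ₗ j) j h_inj h_range f⟩

end LinearAlgebra

section Polynomial

open MvPolynomial

lemma totalDegree_aeval_le {R σ τ : Type*} [CommSemiring R] {φ : σ → MvPolynomial τ R}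
    (hφ : ∀ i, (φ i).totalDegree ≤ 1) (f : MvPolynomial σ R) :
    (aeval φ f).totalDegree ≤ f.totalDegree := by
  conv_lhs => rw [f.as_sum, map_sum]
  refine totalDegree_finsetSum_le fun m hm => ?_
  calc (aeval φ (monomial m (coeff m f))).totalDegree
      ≤ (m.prod fun i e => φ i ^ e).totalDegree := by
        rw [aeval_monomial, algebraMap_eq, ← smul_eq_C_mul]
        exact totalDegree_smul_le _ _
    _ ≤ m.sum fun i e => (φ i ^ e).totalDegree := totalDegree_finsetProd _ _
    _ ≤ m.sum fun _ e => e := Finset.sum_le_sum fun i _ =>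
        (totalDegree_pow _ _).trans (mul_le_of_le_one_right (Nat.zero_le _) (hφ i))
    _ ≤ f.totalDegree := le_totalDegree hm

lemma dvd_aeval_sub_aeval {R σ A : Type*} [CommRing R] [CommRing A] [Algebra R A] {a : A}
    {φ ψ : MvPolynomial σ R →ₐ[R] A} (h : ∀ j, a ∣ φ (X j) - ψ (X j)) (f : MvPolynomial σ R) :
    a ∣ φ f - ψ f := by
  let π := Ideal.Quotient.mkₐ R (Ideal.span {a})
  have hπ : ∀ p q : A, π p = π q ↔ a ∣ p - q := fun p q => by
    simp [π, Ideal.Quotient.eq, Ideal.mem_span_singleton]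
  have : π.comp φ = π.comp ψ := algHom_ext fun j => (hπ _ _).2 (h j)
  exact (hπ _ _).1 (DFunLike.congr_fun this f)

variable {d : ℕ}

lemma eval_lin (θ : Vd d →ₗ[ℂ] ℂ) (v : Vd d) : eval v (lin θ) = θ v := by
  conv_rhs => rw [pi_eq_sum_univ' v, map_sum]
  simp [lin, smul_eval, mul_comm]

lemma totalDegree_lin_le (θ : Vd d →ₗ[ℂ] ℂ) : (lin θ).totalDegree ≤ 1 :=
  totalDegree_finsetSum_le fun j _ => (totalDegree_smul_le _ _).trans (totalDegree_X j).le

lemma totalDegree_lin {θ : Vd d →ₗ[ℂ] ℂ} (hθ : lin θ ≠ 0) : (lin θ).totalDegree = 1 := by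
  refine (totalDegree_lin_le θ).antisymm (Nat.one_le_iff_ne_zero.2 fun h => hθ ?_)
  obtain ⟨c, hc⟩ : ∃ c, lin θ = C c := ⟨_, totalDegree_eq_zero_iff_eq_C.1 h⟩
  have : c = 0 := by simpa [hc] using eval_lin θ 0
  rw [hc, this, C_0]

lemma eval_glAct (g : GL (Fin d) ℂ) (f : Ad d) (v : Vd d) :
    eval v (glAct g f) = eval ((g⁻¹ : GL (Fin d) ℂ).val.mulVec v) f := by
  induction f using MvPolynomial.induction_on with
  | C a => simp [glAct]
  | add p q hp hq => simp only [map_add, hp, hq]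
  | mul_X p j hp =>
    rw [map_mul, map_mul, map_mul, hp]
    congr 1
    simp [glAct, Matrix.mulVec, dotProduct]

lemma totalDegree_glAct_le (g : GL (Fin d) ℂ) (f : Ad d) :
    (glAct g f).totalDegree ≤ f.totalDegree :=
  totalDegree_aeval_le (fun _ => totalDegree_finsetSum_le fun k _ =>
    (totalDegree_smul_le _ _).trans (totalDegree_X k).le) f

instance : MulSemiringAction (GL (Fin d) ℂ) (Ad d) where
  smul g := glAct g
  one_smul f := MvPolynomial.funext fun v => by
    change eval v (glAct 1 f) = _
    simp [eval_glAct]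
  mul_smul g h f := MvPolynomial.funext fun v => by
    change eval v (glAct (g * h) f) = eval v (glAct g (glAct h f))
    simp only [eval_glAct, mul_inv_rev, Units.val_mul, Matrix.mulVec_mulVec]
  smul_zero g := map_zero _
  smul_add g := map_add _
  smul_one g := map_one _
  smul_mul g := map_mul _

end Polynomial

namespace CoxeterSetup

open MvPolynomial
open scoped Pointwise

variable {d n : ℕ} (S : CoxeterSetup d n)

section Invariants

/-- The algebra `A^Γ` of invariant polynomials. -/
abbrev invariants : Subalgebra ℂ (Ad d) := FixedSub S ⊤

lemma smul_eq_glAct (g : S.Γ) (f : Ad d) : g • f = glAct (g : GL (Fin d) ℂ) f := rfl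

lemma mem_invariants {f : Ad d} : f ∈ S.invariants ↔ ∀ g : S.Γ, g • f = f :=
  ⟨fun h g => h g trivial, fun h g _ => h g⟩

instance : SMulCommClass S.Γ S.invariants (Ad d) where
  smul_comm g b f := by
    rw [Subalgebra.smul_def, Subalgebra.smul_def, smul_eq_mul, smul_eq_mul, smul_mul',
      S.mem_invariants.1 b.2]

instance : Algebra.IsInvariant S.invariants (Ad d) S.Γ where
  isInvariant f hf := ⟨⟨f, S.mem_invariants.2 hf⟩, rfl⟩

instance : Finite S.Γ := S.finite

instance : Algebra.IsIntegral S.invariants (Ad d) :=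
  Algebra.IsInvariant.isIntegral S.invariants (Ad d) S.Γ

instance : Module.Finite S.invariants (Ad d) :=
  have : Algebra.FiniteType S.invariants (Ad d) :=
    Algebra.FiniteType.of_restrictScalars_finiteType ℂ _ _
  Algebra.IsIntegral.finite

variable {S}

lemma mem_of_forall_sub_smul_mem {N : Submodule S.invariants (Ad d)} (h_one : 1 ∈ N) {f : Ad d}
    (hf : ∀ g : S.Γ, f - g • f ∈ N) : f ∈ N := by
  have := Fintype.ofFinite S.Γ
  have h_avg : ∑ g : S.Γ, g • f ∈ S.invariants := S.mem_invariants.2 fun h => by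
    rw [Finset.smul_sum]
    exact Fintype.sum_equiv (Equiv.mulLeft h) _ _ fun g => (mul_smul h g f).symm
  have h_sum : Fintype.card S.Γ • f ∈ N := by
    have h_avg_mem : ∑ g : S.Γ, g • f ∈ N := by
      simpa [Subalgebra.smul_def] using N.smul_mem ⟨_, h_avg⟩ h_one
    simpa using add_mem (sum_mem fun g (_ : g ∈ Finset.univ) => hf g) h_avg_mem
  rw [← Nat.cast_smul_eq_nsmul ℂ] at h_sum
  exact ((N.restrictScalars ℂ).smul_mem_iff (Nat.cast_ne_zero.2 Fintype.card_ne_zero)).1 h_sum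

lemma sub_smul_mem_of_forall_simple {N : Submodule S.invariants (Ad d)}
    (hN : ∀ (g : S.Γ), ∀ f ∈ N, g • f ∈ N) {f : Ad d} (hf : ∀ i, f - S.s i • f ∈ N) (g : S.Γ) :
    f - g • f ∈ N := by
  have hg : g ∈ Subgroup.closure (Set.range S.s) := S.gen ▸ Subgroup.mem_top g
  induction hg using Subgroup.closure_induction with
  | mem _ h => obtain ⟨i, rfl⟩ := h; exact hf i
  | one => simp
  | mul x y _ _ hx hy => simpa [smul_sub, mul_smul] using add_mem hx (hN x _ hy)
  | inv x _ hx => simpa [smul_sub] using neg_mem (hN x⁻¹ _ hx)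

variable (S)

/-- The `A^Γ`-submodule of `A` generated by the polynomials of degree less than `k`. -/
def spanDegreeLT (k : ℕ) : Submodule S.invariants (Ad d) :=
  Submodule.span S.invariants {f | f.totalDegree < k}

lemma exists_spanDegreeLT_eq_top : ∃ k, S.spanDegreeLT k = ⊤ := by
  obtain ⟨s, hs⟩ := Module.Finite.fg_top (R := S.invariants) (M := Ad d)
  refine ⟨s.sup totalDegree + 1, top_le_iff.1 (hs ▸ Submodule.span_mono fun f hf => ?_)⟩
  exact Nat.lt_succ_of_le (Finset.le_sup (f := totalDegree) hf)

variable {S} {k : ℕ} {f : Ad d}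

lemma smul_mem_spanDegreeLT (g : S.Γ) (hf : f ∈ S.spanDegreeLT k) : g • f ∈ S.spanDegreeLT k :=
  have : S.spanDegreeLT k ≤
      (S.spanDegreeLT k).comap (DistribSMul.toLinearMap S.invariants (Ad d) g) :=
    Submodule.span_le.2 fun a (ha : a.totalDegree < k) =>
      Submodule.subset_span ((totalDegree_glAct_le (g : GL (Fin d) ℂ) a).trans_lt ha)
  this hf

lemma lin_mul_mem_spanDegreeLT (θ : Vd d →ₗ[ℂ] ℂ) (hf : f ∈ S.spanDegreeLT k) :
    lin θ * f ∈ S.spanDegreeLT (k + 1) :=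
  have : S.spanDegreeLT k ≤
      (S.spanDegreeLT (k + 1)).comap (LinearMap.mulLeft S.invariants (lin θ)) :=
    Submodule.span_le.2 fun a (ha : a.totalDegree < k) => Submodule.subset_span <| by
      have h_mul := totalDegree_mul (lin θ) a
      have h_lin := totalDegree_lin_le θ
      change (lin θ * a).totalDegree < k + 1
      omega
  this hf

end Invariants

section Demazure

lemma lin_root_ne_zero (i : Fin n) : lin (S.α i) ≠ 0 := fun h => by
  simpa [h, S.pairing] using eval_lin (S.α i) (S.coroot i)

lemma simple_mul_self (i : Fin n) : S.s i * S.s i = 1 := by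
  refine Subtype.ext (Units.ext (Matrix.ext_iff_mulVec.2 fun v => ?_))
  ext j
  simp [← Matrix.mulVec_mulVec, S.refl, S.pairing]
  ring

lemma simple_smul_X (i : Fin n) (j : Fin d) :
    S.s i • (X j : Ad d) = X j - S.coroot i j • lin (S.α i) := by
  have h_inv : (S.s i : GL (Fin d) ℂ)⁻¹ = S.s i :=
    congrArg Subtype.val (inv_eq_of_mul_eq_one_left (S.simple_mul_self i))
  refine MvPolynomial.funext fun v => ?_
  simp [smul_eq_glAct, eval_glAct, h_inv, S.refl, eval_lin, mul_comm]

lemma lin_root_dvd_sub_smul (i : Fin n) (f : Ad d) : lin (S.α i) ∣ f - S.s i • f := by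
  refine dvd_aeval_sub_aeval (φ := AlgHom.id ℂ (Ad d)) (ψ := glAct (S.s i : GL (Fin d) ℂ))
    (fun j => ?_) f
  rw [AlgHom.id_apply, ← smul_eq_glAct, simple_smul_X, sub_sub_cancel, smul_eq_C_mul]
  exact dvd_mul_left _ _

/-- The Demazure operator `f ↦ αᵢ⁻¹ (f - sᵢ f)` on polynomials. -/
def demazure (i : Fin n) : Module.End S.invariants (Ad d) :=
  LinearMap.codRestrictOfInjective (1 - DistribSMul.toLinearMap S.invariants (Ad d) (S.s i))
    (LinearMap.mulLeft S.invariants (lin (S.α i)))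
    (mul_right_injective₀ (S.lin_root_ne_zero i))
    fun f => (S.lin_root_dvd_sub_smul i f).imp fun _ => Eq.symm

lemma lin_root_mul_demazure (i : Fin n) (f : Ad d) :
    lin (S.α i) * S.demazure i f = f - S.s i • f :=
  LinearMap.codRestrictOfInjective_comp_apply _ (LinearMap.mulLeft S.invariants (lin (S.α i))) _ _ f

variable {S} {k : ℕ} {f : Ad d}

lemma totalDegree_demazure_le (i : Fin n) (hf : f.totalDegree ≤ k + 1) :
    (S.demazure i f).totalDegree ≤ k := by
  by_cases h_zero : S.demazure i f = 0
  · simp [h_zero]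
  have h_mul := totalDegree_mul_of_isDomain (S.lin_root_ne_zero i) h_zero
  rw [lin_root_mul_demazure, totalDegree_lin (S.lin_root_ne_zero i)] at h_mul
  have h_sub : (f - S.s i • f).totalDegree ≤ f.totalDegree :=
    (totalDegree_sub _ _).trans (max_le le_rfl (totalDegree_glAct_le _ f))
  omega

variable (S) in
/-- The `k`-fold products of Demazure operators. -/
def demazureWords (k : ℕ) : Set (Module.End S.invariants (Ad d)) := Set.range S.demazure ^ k

lemma demazureWords_zero : S.demazureWords 0 = {1} := pow_zero _

lemma demazureWords_succ : S.demazureWords (k + 1) = S.demazureWords k * Set.range S.demazure :=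
  pow_succ _ _

instance (k : ℕ) : Finite (S.demazureWords k) := by
  induction k with
  | zero => rw [demazureWords_zero]; infer_instance
  | succ k ih =>
    rw [demazureWords_succ]
    exact ((Set.toFinite (S.demazureWords k)).mul (Set.finite_range _)).to_subtype

lemma totalDegree_demazureWord {w : Module.End S.invariants (Ad d)} (hw : w ∈ S.demazureWords k)
    (hf : f.totalDegree ≤ k) : (w f).totalDegree = 0 := by
  induction k generalizing w f with
  | zero =>
    obtain rfl : w = 1 := by simpa [demazureWords_zero] using hw
    exact Nat.le_zero.1 hf
  | succ k ih =>
    obtain ⟨v, hv, _, ⟨i, rfl⟩, rfl⟩ := Set.mem_mul.1 (demazureWords_succ ▸ hw)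
    exact ih (w := v) hv (totalDegree_demazure_le i hf)

/- If all words kill `f`, then by induction each `f - sᵢ f` lies in `spanDegreeLT`, which is
`Γ`-stable; hence so does every `f - g f`, and averaging over `Γ` leaves an invariant. -/
lemma mem_spanDegreeLT_of_demazureWords_eq_zero (hf : f.totalDegree ≤ k)
    (hw : ∀ w ∈ S.demazureWords k, w f = 0) : f ∈ S.spanDegreeLT k := by
  induction k generalizing f with
  | zero =>
    obtain rfl : f = 0 := hw 1 (demazureWords_zero ▸ rfl)
    exact zero_mem _
  | succ k ih =>
    have h_simple (i : Fin n) : f - S.s i • f ∈ S.spanDegreeLT (k + 1) := by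
      rw [← lin_root_mul_demazure]
      refine lin_mul_mem_spanDegreeLT _ (ih (totalDegree_demazure_le i hf) fun w hwk => ?_)
      exact hw (w * S.demazure i) (demazureWords_succ ▸ Set.mul_mem_mul hwk ⟨i, rfl⟩)
    exact mem_of_forall_sub_smul_mem (Submodule.subset_span (by simp))
      (sub_smul_mem_of_forall_simple (fun g _ => smul_mem_spanDegreeLT g) h_simple)

end Demazure

section PolynomialNilHecke

/-- The nil Hecke algebra acting on `A`: it is generated by multiplications by polynomials and
the Demazure operators. -/
def polynomialNilHecke : Subalgebra ℂ (Module.End S.invariants (Ad d)) :=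
  Algebra.adjoin ℂ (Set.range (LinearMap.mulLeft S.invariants) ∪ Set.range S.demazure)

variable {S} {k : ℕ} {y : Module.End S.invariants (Ad d)}

lemma mulLeft_mem_polynomialNilHecke (a : Ad d) :
    LinearMap.mulLeft S.invariants a ∈ S.polynomialNilHecke :=
  Algebra.subset_adjoin (Or.inl ⟨a, rfl⟩)

lemma demazureWord_mem_polynomialNilHecke (hy : y ∈ S.demazureWords k) :
    y ∈ S.polynomialNilHecke :=
  Submonoid.pow_subset (S := S.polynomialNilHecke.toSubmonoid)
    (fun _ hw => Algebra.subset_adjoin (Or.inr hw)) hy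

lemma eq_zero_of_mem_spanDegreeLT (hy : ∀ f : Ad d, f.totalDegree < k → y f = 0) {f : Ad d}
    (hf : f ∈ S.spanDegreeLT k) : y f = 0 :=
  LinearMap.eqOn_span (g := 0) hy hf

/- On polynomials of degree at most `k`, words of length `k` take constant values, and `y` vanishes
on their common kernel; so `y` is a combination of these words with coefficients in `A`. -/
lemma exists_mem_polynomialNilHecke_eqOn (hy : ∀ f : Ad d, f.totalDegree < k → y f = 0) :
    ∃ h ∈ S.polynomialNilHecke, ∀ f : Ad d, f.totalDegree ≤ k → y f = h f := by
  have := Fintype.ofFinite (S.demazureWords k)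
  let F := restrictTotalDegree (Fin d) ℂ k
  let L : F →ₗ[ℂ] (S.demazureWords k → ℂ) :=
    LinearMap.pi fun w => lcoeff ℂ 0 ∘ₗ w.1.restrictScalars ℂ ∘ₗ F.subtype
  have hL (f : F) (w : S.demazureWords k) : w.1 f = C (L f w) :=
    totalDegree_eq_zero_iff_eq_C.1
      (totalDegree_demazureWord w.2 ((mem_restrictTotalDegree _ _ _).1 f.2))
  have h_ker : LinearMap.ker L ≤ LinearMap.ker (y.restrictScalars ℂ ∘ₗ F.subtype) := fun f hf =>
    eq_zero_of_mem_spanDegreeLT hy <| mem_spanDegreeLT_of_demazureWords_eq_zero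
      ((mem_restrictTotalDegree _ _ _).1 f.2) fun w hw => by
        simpa [LinearMap.mem_ker.1 hf] using hL f ⟨w, hw⟩
  obtain ⟨T, hT⟩ := exists_comp_eq_of_ker_le_ker h_ker
  classical
  refine ⟨∑ w : S.demazureWords k, LinearMap.mulLeft S.invariants (T (Pi.single w 1)) * w.1,
    sum_mem fun w _ => mul_mem (mulLeft_mem_polynomialNilHecke _)
      (demazureWord_mem_polynomialNilHecke w.2), fun f hf => ?_⟩
  let f' : F := ⟨f, (mem_restrictTotalDegree _ _ _).2 hf⟩
  calc y f = T (L f') := (LinearMap.congr_fun hT f').symm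
    _ = ∑ w, L f' w • T (Pi.single w 1) := by
      conv_lhs => rw [pi_eq_sum_univ' (L f'), map_sum]
      simp only [map_smul]
    _ = _ := by
      rw [LinearMap.sum_apply]
      refine Finset.sum_congr rfl fun w _ => ?_
      rw [Module.End.mul_apply, LinearMap.mulLeft_apply, hL f' w, mul_comm, smul_eq_C_mul]

lemma exists_mem_polynomialNilHecke_eqOn_degreeLT (y : Module.End S.invariants (Ad d)) (k : ℕ) :
    ∃ h ∈ S.polynomialNilHecke, ∀ f : Ad d, f.totalDegree < k → y f = h f := by
  induction k with
  | zero => exact ⟨0, zero_mem _, fun _ hf => absurd hf (Nat.not_lt_zero _)⟩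
  | succ k ih =>
    obtain ⟨h, hh, hyh⟩ := ih
    obtain ⟨h', hh', hyh'⟩ := exists_mem_polynomialNilHecke_eqOn (y := y - h) (k := k)
      fun f hf => sub_eq_zero.2 (hyh f hf)
    refine ⟨h + h', add_mem hh hh', fun f hf => ?_⟩
    rw [LinearMap.add_apply, ← hyh' f (Nat.lt_succ_iff.1 hf), LinearMap.sub_apply,
      add_sub_cancel]

variable (S) in
theorem polynomialNilHecke_eq_top : S.polynomialNilHecke = ⊤ := by
  refine eq_top_iff.2 fun y _ => ?_
  obtain ⟨k, hk⟩ := S.exists_spanDegreeLT_eq_top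
  obtain ⟨h, hh, hyh⟩ := exists_mem_polynomialNilHecke_eqOn_degreeLT y k
  rwa [LinearMap.ext_on hk hyh]

end PolynomialNilHecke

section FractionField

variable {K : Type*} [Field K] [Algebra ℂ K] [Algebra (Ad d) K] (ψ : S.Γ → K →ₐ[ℂ] K)

/-- The nil Hecke algebra acting on the fraction field `K`, on which `Γ` acts through `ψ`. -/
def nilHecke : Subalgebra ℂ (Module.End ℂ K) :=
  Algebra.adjoin ℂ
    ((Set.range fun f : Ad d => LinearMap.mulLeft ℂ (algebraMap (Ad d) K f)) ∪
      Set.range fun i : Fin n =>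
        LinearMap.mulLeft ℂ (algebraMap (Ad d) K (lin (S.α i)))⁻¹ * (1 - (ψ (S.s i)).toLinearMap))

/-- The image of the smash product `Γ # K` in `End_ℂ(K)`, where `Γ` acts on `K` through `ψ`. -/
def smashImage : Subalgebra ℂ (Module.End ℂ K) :=
  Algebra.adjoin ℂ ((Set.range fun y : K => LinearMap.mulLeft ℂ y) ∪
    Set.range fun g : S.Γ => (ψ g).toLinearMap)

lemma nilHecke_le_smashImage : S.nilHecke ψ ≤ S.smashImage ψ := by
  refine Algebra.adjoin_le ?_
  rintro _ (⟨f, rfl⟩ | ⟨i, rfl⟩)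
  · exact Algebra.subset_adjoin (Or.inl ⟨_, rfl⟩)
  · exact mul_mem (Algebra.subset_adjoin (Or.inl ⟨_, rfl⟩))
      (sub_mem (one_mem _) (Algebra.subset_adjoin (Or.inr ⟨_, rfl⟩)))

variable {S ψ}
  (hψ : ∀ (g : S.Γ) (f : Ad d), ψ g (algebraMap (Ad d) K f) = algebraMap (Ad d) K (g • f))

include hψ

lemma inv_root_mul_sub_apply_algebraMap [FaithfulSMul (Ad d) K] (i : Fin n) (f : Ad d) :
    (LinearMap.mulLeft ℂ (algebraMap (Ad d) K (lin (S.α i)))⁻¹ *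
      (1 - (ψ (S.s i)).toLinearMap) : Module.End ℂ K) (algebraMap (Ad d) K f) =
      algebraMap (Ad d) K (S.demazure i f) := by
  have h_root : algebraMap (Ad d) K (lin (S.α i)) ≠ 0 := by
    simpa using S.lin_root_ne_zero i
  change _⁻¹ * (algebraMap (Ad d) K f - ψ (S.s i) (algebraMap (Ad d) K f)) = _
  rw [hψ, ← map_sub, ← lin_root_mul_demazure, map_mul, inv_mul_cancel_left₀ h_root]

variable [IsScalarTower ℂ (Ad d) K]

lemma nilHecke_le_imageStabilizer [FaithfulSMul (Ad d) K] :
    S.nilHecke ψ ≤ imageStabilizer ℂ (Ad d) K := by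
  refine Algebra.adjoin_le ?_
  rintro _ (⟨a, rfl⟩ | ⟨i, rfl⟩) f
  · exact ⟨a * f, (map_mul _ a f).symm⟩
  · exact ⟨S.demazure i f, inv_root_mul_sub_apply_algebraMap hψ i f⟩

lemma exists_mem_nilHecke_apply_eq [FaithfulSMul (Ad d) K] (y : Module.End S.invariants (Ad d)) :
    ∃ h ∈ S.nilHecke ψ, ∀ f, h (algebraMap (Ad d) K f) = algebraMap (Ad d) K (y f) := by
  have hy : y ∈ S.polynomialNilHecke := S.polynomialNilHecke_eq_top ▸ Algebra.mem_top
  induction hy using Algebra.adjoin_induction with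
  | mem y hy =>
    obtain ⟨a, rfl⟩ | ⟨i, rfl⟩ := hy
    · exact ⟨_, Algebra.subset_adjoin (Or.inl ⟨a, rfl⟩), fun f => (map_mul _ a f).symm⟩
    · exact ⟨_, Algebra.subset_adjoin (Or.inr ⟨i, rfl⟩), inv_root_mul_sub_apply_algebraMap hψ i⟩
  | algebraMap r =>
    exact ⟨algebraMap ℂ _ r, Subalgebra.algebraMap_mem _ r, fun f =>
      ((Algebra.linearMap (Ad d) K).map_smul_of_tower r f).symm⟩
  | add y y' _ _ ih ih' =>
    obtain ⟨h, hh, hy⟩ := ih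
    obtain ⟨h', hh', hy'⟩ := ih'
    exact ⟨h + h', add_mem hh hh', fun f => by simp [hy, hy']⟩
  | mul y y' _ _ ih ih' =>
    obtain ⟨h, hh, hy⟩ := ih
    obtain ⟨h', hh', hy'⟩ := ih'
    exact ⟨h * h', mul_mem hh hh', fun f => by simp [hy, hy']⟩

lemma smashImage_le_range_endRestrictScalars :
    S.smashImage ψ ≤ (endRestrictScalars ℂ S.invariants K).range := by
  refine Algebra.adjoin_le ?_
  rintro _ (⟨y, rfl⟩ | ⟨g, rfl⟩)
  · exact ⟨LinearMap.mulLeft S.invariants y, rfl⟩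
  · refine ⟨{ ψ g with map_smul' := fun b z => ?_ }, rfl⟩
    change ψ g ((b : Ad d) • z) = (b : Ad d) • ψ g z
    rw [Algebra.smul_def, Algebra.smul_def, map_mul, hψ, S.mem_invariants.1 b.2]

end FractionField

end CoxeterSetup

open CoxeterSetup in
open scoped nonZeroDivisors in
theorem nilHecke_eq_stabilizer_of_smash_general {d n : ℕ} {S : CoxeterSetup d n} {K : Type*}
    [Field K] [Algebra ℂ K] [Algebra (Ad d) K] [IsScalarTower ℂ (Ad d) K] [IsFractionRing (Ad d) K]
    {ψ : S.Γ → K →ₐ[ℂ] K}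
    (hψ : ∀ (g : S.Γ) (f : Ad d), ψ g (algebraMap (Ad d) K f) = algebraMap (Ad d) K (g • f)) :
    S.nilHecke ψ = S.smashImage ψ ⊓ imageStabilizer ℂ (Ad d) K := by
  refine le_antisymm
    (le_inf (S.nilHecke_le_smashImage ψ) (nilHecke_le_imageStabilizer hψ)) fun x ⟨hx, hxA⟩ => ?_
  obtain ⟨x, rfl⟩ := smashImage_le_range_endRestrictScalars hψ hx
  obtain ⟨y, hy⟩ := exists_algebraMap_apply_eq (x := x) hxA
  obtain ⟨h, hh, hhy⟩ := exists_mem_nilHecke_apply_eq hψ y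
  obtain ⟨h, rfl⟩ := smashImage_le_range_endRestrictScalars hψ (S.nilHecke_le_smashImage ψ hh)
  let j := (IsScalarTower.toAlgHom S.invariants (Ad d) K).toLinearMap
  have h_eq : x = h := IsLocalizedModule.linearMap_ext S.invariants⁰ j j <|
    LinearMap.ext fun f => (hy f).symm.trans (hhy f).symm
  rwa [h_eq]

/-- Inside `End_ℂ(K)` for `K = ℂ(V)` the fraction field of `A` (with its
induced `Γ`-action `ψ`), the subalgebra generated by multiplication by elements of `A`
together with the Demazure operators `Dᵢ = αᵢ⁻¹·(1 − sᵢ)` equals the set of elements of the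
image `S` of the smash product `Γ # K` which stabilize `A`. -/
theorem nilHecke_eq_stabilizer_of_smash {d n : ℕ} (S : CoxeterSetup d n)
    (ψ : S.Γ →* (FractionRing (Ad d) ≃ₐ[ℂ] FractionRing (Ad d)))
    (hψ : ∀ (g : S.Γ) (f : Ad d),
      ψ g (algebraMap (Ad d) (FractionRing (Ad d)) f) =
        algebraMap (Ad d) (FractionRing (Ad d)) (glAct (g : GL (Fin d) ℂ) f)) :
    ∀ x : Module.End ℂ (FractionRing (Ad d)),
      (x ∈ Algebra.adjoin ℂ
          ((Set.range fun f : Ad d =>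
              (LinearMap.mulLeft ℂ (algebraMap (Ad d) (FractionRing (Ad d)) f) :
                Module.End ℂ (FractionRing (Ad d)))) ∪
            (Set.range fun i : Fin n =>
              (LinearMap.mulLeft ℂ
                  ((algebraMap (Ad d) (FractionRing (Ad d)) (lin (S.α i)))⁻¹) :
                Module.End ℂ (FractionRing (Ad d))) *
              (1 - (ψ (S.s i)).toLinearMap)))) ↔
      (x ∈ Algebra.adjoin ℂ
          ((Set.range fun y : FractionRing (Ad d) =>
              (LinearMap.mulLeft ℂ y : Module.End ℂ (FractionRing (Ad d)))) ∪
            (Set.range fun g : S.Γ =>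
              ((ψ g).toLinearMap : Module.End ℂ (FractionRing (Ad d))))) ∧
        ∀ f : Ad d, ∃ q : Ad d,
          x (algebraMap (Ad d) (FractionRing (Ad d)) f) =
            algebraMap (Ad d) (FractionRing (Ad d)) q) := by
  have h := nilHecke_eq_stabilizer_of_smash_general (K := FractionRing (Ad d))
    (ψ := fun g => (ψ g).toAlgHom) hψ
  exact SetLike.ext_iff.1 h
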